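/- For every finite string W over {A, X, B}, one has |(WX)| + 2|(WB)| − |W| = 0, where |(·)| denotes the cyclic value and |W| the open value in the tight puzzle. -/

import Mathlib

/-!
The "tight puzzle" of Schwartz–Tabachnikov.  Strings over the alphabet `{A, X, B}`;
word list (coefficient, weight): `X (1,0)`, `XA (1,1)`, `XAA (1,1)`, `AXA (2,1)`,
`AAA (-1,1)`, `BA (-1,1)`, `ABA (-1,1)`, `XXA (-1,1)`; in a parsing the word `X` may
never be immediately followed by the word `XA` or the word `BA`.
-/

open scoped Classical

/-- The three-letter alphabet. -/
inductive PLetter | A | X | B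
deriving DecidableEq

/-- Strings over the alphabet. -/
abbrev PWord := List PLetter

/-- The tight puzzle word list. -/
def tightWords : List PWord :=
  [[PLetter.X], [PLetter.X, PLetter.A], [PLetter.X, PLetter.A, PLetter.A],
   [PLetter.A, PLetter.X, PLetter.A], [PLetter.A, PLetter.A, PLetter.A],
   [PLetter.B, PLetter.A], [PLetter.A, PLetter.B, PLetter.A],
   [PLetter.X, PLetter.X, PLetter.A]]

/-- Coefficients of the words of the tight puzzle (`AXA ↦ 2`; `AAA, BA, ABA, XXA ↦ -1`;
`X, XA, XAA ↦ 1`). -/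
def tightCoeff (w : PWord) : ℤ :=
  if w = [PLetter.A, PLetter.X, PLetter.A] then 2
  else if w = [PLetter.A, PLetter.A, PLetter.A] ∨ w = [PLetter.B, PLetter.A] ∨
      w = [PLetter.A, PLetter.B, PLetter.A] ∨ w = [PLetter.X, PLetter.X, PLetter.A] then -1
  else 1

/-- Weights of the words: the word `X` has weight `0`, all other words weight `1`. -/
def wordWt (w : PWord) : ℕ := if w = [PLetter.X] then 0 else 1

/-- The forbidden adjacency: the word `X` immediately followed by `XA` or `BA`. -/
def Bad (u v : PWord) : Prop :=
  u = [PLetter.X] ∧ (v = [PLetter.X, PLetter.A] ∨ v = [PLetter.B, PLetter.A])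

/-- The contribution `coefficient · t^weight ∈ ℤ[t]` of a parsing `L`. -/
noncomputable def parseVal (c : PWord → ℤ) (L : List PWord) : Polynomial ℤ :=
  Polynomial.C ((L.map c).prod) * Polynomial.X ^ ((L.map wordWt).sum)

/-- `L` is a parsing in the tight puzzle: all its words are on the word list and the
forbidden adjacency never occurs. -/
def TightChain (L : List PWord) : Prop :=
  (∀ w ∈ L, w ∈ tightWords) ∧ List.Chain' (fun u v => ¬ Bad u v) L

/-- The *core* of a string: what remains after deleting all leading and trailing `X`s. -/
def core (s : PWord) : PWord :=
  ((s.dropWhile (· == PLetter.X)).reverse.dropWhile (· == PLetter.X)).reverse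

/-- `L` is a parsing of the bi-infinite string `⋯XX·W·XX⋯` (with the infinitely many
padding `X`s parsed as copies of the word `X` and trimmed away): the words of `L`
concatenate to `W` up to padding by `X`s on either side, `L` neither starts nor ends
with the word `X`, and (because of the padding `X`-words on the left) the first word
of `L` is not `XA` or `BA`. -/
def IsOpenParsing (W : PWord) (L : List PWord) : Prop :=
  TightChain L ∧ core L.flatten = core W ∧
  ∀ h : L ≠ [],
    L.head h ≠ [PLetter.X] ∧ L.head h ≠ [PLetter.X, PLetter.A] ∧
    L.head h ≠ [PLetter.B, PLetter.A] ∧ L.getLast h ≠ [PLetter.X]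

/-- `(r, L)` is a parsing of the cyclic string `(W)`: reading the necklace of the
letters of `W` starting at position `r`, the words of `L` concatenate to it, the
forbidden adjacency does not occur (cyclically), and `r < (last word).length`
(so that every parsing of the necklace is counted exactly once). -/
def IsCyclicParsing (W : PWord) (r : ℕ) (L : List PWord) : Prop :=
  TightChain L ∧
  ∃ h : L ≠ [], L.flatten = W.rotate r ∧ r < (L.getLast h).length ∧
    ¬ Bad (L.getLast h) (L.head h)

/-- `L` is a parsing of the locked string `[W]`: the words of `L` concatenate exactly
to `W`, no padding allowed. -/
def IsLockedParsing (W : PWord) (L : List PWord) : Prop :=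
  TightChain L ∧ L.flatten = W

/-- The nine words of both puzzles, as a function (used to enumerate parsings). -/
def wordOf : Fin 9 → PWord :=
  ![[PLetter.X], [PLetter.X, PLetter.A], [PLetter.X, PLetter.A, PLetter.A],
    [PLetter.X, PLetter.B, PLetter.A], [PLetter.A, PLetter.X, PLetter.A],
    [PLetter.A, PLetter.A, PLetter.A], [PLetter.B, PLetter.A],
    [PLetter.A, PLetter.B, PLetter.A], [PLetter.X, PLetter.X, PLetter.A]]

/-- The open value `|W| ∈ ℤ[t]`: the sum of `coefficient · t^weight` over all parsings
of the bi-infinite string `⋯XX·W·XX⋯` (any such parsing consists of at most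
`W.length + 2` words). -/
noncomputable def openVal (W : PWord) : Polynomial ℤ :=
  ∑ k ∈ Finset.range (W.length + 3), ∑ f : Fin k → Fin 9,
    if IsOpenParsing W ((List.ofFn f).map wordOf) then
      parseVal tightCoeff ((List.ofFn f).map wordOf)
    else 0

/-- The cyclic value `|(W)| ∈ ℤ[t]`: the sum of `coefficient · t^weight` over all
parsings of the cyclic string `(W)`. -/
noncomputable def cycVal (W : PWord) : Polynomial ℤ :=
  ∑ r ∈ Finset.range W.length, ∑ k ∈ Finset.range (W.length + 1), ∑ f : Fin k → Fin 9,
    if IsCyclicParsing W r ((List.ofFn f).map wordOf) then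
      parseVal tightCoeff ((List.ofFn f).map wordOf)
    else 0

/-- The locked value `|[W]| ∈ ℤ[t]`: the sum of `coefficient · t^weight` over all
parsings whose concatenation is exactly `W`. -/
noncomputable def lockVal (W : PWord) : Polynomial ℤ :=
  ∑ k ∈ Finset.range (W.length + 1), ∑ f : Fin k → Fin 9,
    if IsLockedParsing W ((List.ofFn f).map wordOf) then
      parseVal tightCoeff ((List.ofFn f).map wordOf)
    else 0

/-!
Cut a cyclic parsing of `(Wc)` at the word that covers the last letter `c`: the cyclic value becomes
a weighted sum of values of parsings of what is left of `W` once a suffix and a prefix of that word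
are removed from its two ends. On the open side no word reaches more than two letters to the left of
its last `A`, so the open value of `W` is that of the parsings of `XXW` that follow the word `X`;
expanding their first words expresses it through parsings of `W` minus a prefix as well. The terms
match because the parsings of the gap that `A` leaves in `W` are those that may precede `XA`, or
equally `BA`, together with those that end in the word `X`.
-/

open PLetter

section ListSum

variable {ι α M : Type*} [Fintype ι]

/-- The sum of `F` over all lists of fewer than `K` members of the finite family `a`, the shape in
which the open and cyclic values are given. -/
def listSum [AddCommMonoid M] (a : ι → α) (K : ℕ) (F : List α → M) : M :=
  ∑ k ∈ Finset.range K, ∑ f : Fin k → ι, F ((List.ofFn f).map a)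

theorem listSum_congr [AddCommMonoid M] {a : ι → α} {K : ℕ} {F G : List α → M}
    (h : ∀ L, F L = G L) : listSum a K F = listSum a K G := by
  rw [funext h]

theorem listSum_zero [AddCommMonoid M] (a : ι → α) (K : ℕ) :
    listSum a K (fun _ => (0 : M)) = 0 := by
  simp [listSum]

theorem listSum_mul_left [NonUnitalNonAssocSemiring M] (a : ι → α) (K : ℕ) (c : M)
    (F : List α → M) : listSum a K (fun L => c * F L) = c * listSum a K F := by
  simp [listSum, Finset.mul_sum]

theorem listSum_eq_of_le [AddCommMonoid M] {a : ι → α} {K K' : ℕ} {F : List α → M}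
    (hK : K ≤ K') (hF : ∀ L, K ≤ L.length → F L = 0) : listSum a K' F = listSum a K F := by
  refine (Finset.sum_subset (Finset.range_mono hK) fun k _ hk => ?_).symm
  exact Finset.sum_eq_zero fun f _ => hF _ (by simpa using hk)

theorem listSum_succ_cons [AddCommMonoid M] (a : ι → α) (K : ℕ) (F : List α → M) :
    listSum a (K + 1) F = F [] + ∑ i, listSum a K (fun L => F (a i :: L)) := by
  simp only [listSum]
  rw [Finset.sum_range_succ', add_comm, Finset.sum_comm]
  congr 1
  · simp
  · refine Finset.sum_congr rfl fun k _ => ?_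
    rw [← (Fin.consEquiv fun _ => ι).sum_comp, Fintype.sum_prod_type]
    simp [Fin.consEquiv, List.ofFn_succ]

theorem listSum_succ_concat [AddCommMonoid M] (a : ι → α) (K : ℕ) (F : List α → M) :
    listSum a (K + 1) F = F [] + ∑ i, listSum a K (fun L => F (L ++ [a i])) := by
  simp only [listSum]
  rw [Finset.sum_range_succ', add_comm, Finset.sum_comm]
  congr 1
  · simp
  · refine Finset.sum_congr rfl fun k _ => ?_
    rw [← (Fin.snocEquiv fun _ => ι).sum_comp, Fintype.sum_prod_type]
    simp only [Fin.snocEquiv_apply, List.ofFn_succ', Fin.snoc_castSucc, Fin.snoc_last,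
      List.concat_eq_append, List.map_append, List.map_cons, List.map_nil]

end ListSum

section Words

theorem ne_nil_of_mem_tightWords {w : PWord} (hw : w ∈ tightWords) : w ≠ [] := by
  rintro rfl
  simp [tightWords] at hw

theorem exists_eq_append_A_of_mem_tightWords {w : PWord} (hw : w ∈ tightWords) (hX : w ≠ [X]) :
    ∃ z, w = z ++ [A] := by
  simp only [tightWords, List.mem_cons, List.not_mem_nil, or_false] at hw
  rcases hw with rfl | rfl | rfl | rfl | rfl | rfl | rfl | rfl
  · exact absurd rfl hX
  all_goals exact ⟨_, (List.dropLast_append_getLast (by simp)).symm⟩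

/-- The factor `coefficient · t^weight` that a word contributes to a parsing. It is set to `0` off
the word list, so that the product over a list of strings vanishes unless all of them are words. -/
noncomputable def wordVal (w : PWord) : Polynomial ℤ :=
  if w ∈ tightWords then parseVal tightCoeff [w] else 0

theorem parseVal_cons (w : PWord) (L : List PWord) :
    parseVal tightCoeff (w :: L) = parseVal tightCoeff [w] * parseVal tightCoeff L := by
  simp only [parseVal, List.map_cons, List.prod_cons, List.sum_cons, map_mul, pow_add,
    List.map_nil, List.prod_nil, List.sum_nil, map_one, pow_zero]
  ring

theorem prod_map_wordVal (L : List PWord) :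
    (L.map wordVal).prod = if ∀ w ∈ L, w ∈ tightWords then parseVal tightCoeff L else 0 := by
  induction L with
  | nil => simp [parseVal]
  | cons w L ih =>
    rw [List.map_cons, List.prod_cons, ih, wordVal, parseVal_cons w L]
    by_cases hw : w ∈ tightWords <;> simp [hw]

theorem ite_forall_mem_tightWords_and (L : List PWord) (P : Prop) [Decidable P]
    [Decidable ((∀ w ∈ L, w ∈ tightWords) ∧ P)] :
    (if (∀ w ∈ L, w ∈ tightWords) ∧ P then parseVal tightCoeff L else 0) =
      if P then (L.map wordVal).prod else 0 := by
  by_cases hP : P <;> simp [hP, prod_map_wordVal]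

theorem length_le_length_flatten_of_prod_ne_zero {L : List PWord}
    (hL : (L.map wordVal).prod ≠ 0) : L.length ≤ L.flatten.length := by
  rw [prod_map_wordVal, ne_eq, ite_eq_right_iff, Classical.not_imp] at hL
  rw [List.length_flatten, ← List.length_map (f := List.length)]
  refine List.length_le_sum_of_one_le _ fun n hn => ?_
  obtain ⟨w, hw, rfl⟩ := List.mem_map.1 hn
  exact List.length_pos_of_ne_nil (ne_nil_of_mem_tightWords (hL.1 w hw))

/-- The sum of `F` over the words of the tight puzzle, weighted by `coefficient · t^weight`. -/
noncomputable def tightSum (F : PWord → Polynomial ℤ) : Polynomial ℤ :=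
  ∑ i, wordVal (wordOf i) * F (wordOf i)

theorem tightSum_eq (F : PWord → Polynomial ℤ) :
    tightSum F = F [X] + Polynomial.X * (F [X, A] + F [X, A, A] + 2 * F [A, X, A] - F [A, A, A] -
      F [B, A] - F [A, B, A] - F [X, X, A]) := by
  have hexpand : tightSum F = wordVal [X] * F [X] + wordVal [X, A] * F [X, A] +
      wordVal [X, A, A] * F [X, A, A] + wordVal [X, B, A] * F [X, B, A] +
      wordVal [A, X, A] * F [A, X, A] + wordVal [A, A, A] * F [A, A, A] +
      wordVal [B, A] * F [B, A] + wordVal [A, B, A] * F [A, B, A] +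
      wordVal [X, X, A] * F [X, X, A] := by
    rw [tightSum, Fin.sum_univ_castSucc, Fin.sum_univ_eight]
    rfl
  have hX : wordVal [X] = 1 := by simp [wordVal, tightWords, parseVal, tightCoeff, wordWt]
  have hXBA : wordVal [X, B, A] = 0 := by simp [wordVal, tightWords]
  have hAXA : wordVal [A, X, A] = 2 * Polynomial.X := by
    simp [wordVal, tightWords, parseVal, tightCoeff, wordWt]
  have hpos : ∀ w ∈ [[X, A], [X, A, A]], wordVal w = Polynomial.X := by
    simp [wordVal, tightWords, parseVal, tightCoeff, wordWt]
  have hneg : ∀ w ∈ [[A, A, A], [B, A], [A, B, A], [X, X, A]], wordVal w = -Polynomial.X := by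
    simp [wordVal, tightWords, parseVal, tightCoeff, wordWt]
  rw [hexpand, hX, hXBA, hAXA, hpos [X, A] (by simp), hpos [X, A, A] (by simp),
    hneg [A, A, A] (by simp), hneg [B, A] (by simp), hneg [A, B, A] (by simp),
    hneg [X, X, A] (by simp)]
  ring

theorem tightSum_eq_add_tightSum_ite (F : PWord → Polynomial ℤ) :
    tightSum F = F [X] + tightSum fun w => if w = [X] then 0 else F w := by
  simp [tightSum_eq]

theorem tightChain_iff (L : List PWord) : TightChain L ↔
    (∀ w ∈ L, w ∈ tightWords) ∧ List.IsChain (fun u v => ¬ Bad u v) L :=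
  Iff.rfl

end Words

section GapVal

/-- `L` fills the gap in `V` left by the prefix `x` and the suffix `y`, without a forbidden
adjacency when the words `p` and `q` come right before and after it. Taking `p` or `q` to be `[]`
lifts the condition on that side. -/
def FillsGap (p q x y V : PWord) (L : List PWord) : Prop :=
  List.IsChain (fun u v => ¬ Bad u v) (p :: (L ++ [q])) ∧ x ++ L.flatten ++ y = V

/-- The sum of the values of the parsings that fill the gap in `V` between `x` and `y`, with
neighbouring words `p` and `q`. -/
noncomputable def gapVal (p q x y V : PWord) : Polynomial ℤ :=
  listSum wordOf (V.length + 1) fun L =>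
    if FillsGap p q x y V L then (L.map wordVal).prod else 0

theorem listSum_fillsGap {K : ℕ} {V : PWord} (hK : V.length < K) (p q x y : PWord) :
    listSum wordOf K (fun L => if FillsGap p q x y V L then (L.map wordVal).prod else 0) =
      gapVal p q x y V := by
  refine listSum_eq_of_le hK fun L hL => ?_
  by_contra hne
  obtain ⟨⟨-, hV⟩, hprod⟩ := ite_ne_right_iff.1 hne
  have hlen := length_le_length_flatten_of_prod_ne_zero hprod
  have := congrArg List.length hV
  simp only [List.length_append] at this
  omega

theorem gapVal_eq_of_fillsGap_iff {p q x y V p' q' x' y' V' : PWord}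
    (h : ∀ L, FillsGap p q x y V L ↔ FillsGap p' q' x' y' V' L) :
    gapVal p q x y V = gapVal p' q' x' y' V' := by
  rw [← listSum_fillsGap (Nat.lt_succ_of_le (le_max_left V.length V'.length)),
    ← listSum_fillsGap (Nat.lt_succ_of_le (le_max_right V.length V'.length))]
  exact listSum_congr fun L => by simp only [h]

theorem gapVal_eq_zero {p q x y V : PWord} (h : ∀ s, x ++ s ++ y ≠ V) :
    gapVal p q x y V = 0 :=
  (listSum_congr fun L => if_neg fun hL => h L.flatten hL.2).trans (listSum_zero _ _)

theorem gapVal_cons_cons (p q x y V : PWord) (c d : PLetter) :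
    gapVal p q (c :: x) y (d :: V) = if c = d then gapVal p q x y V else 0 := by
  split_ifs with h
  · exact gapVal_eq_of_fillsGap_iff fun L => by simp [FillsGap, h]
  · exact gapVal_eq_zero fun s => by simp [h]

theorem gapVal_append_append (p q x y z V : PWord) :
    gapVal p q x (y ++ z) (V ++ z) = gapVal p q x y V :=
  gapVal_eq_of_fillsGap_iff fun L => by
    simp only [FillsGap, ← List.append_assoc, List.append_left_inj]

theorem gapVal_eq_zero_of_getLast?_ne {y V : PWord} (hy : y ≠ []) (h : y.getLast? ≠ V.getLast?)
    (p q x : PWord) : gapVal p q x y V = 0 :=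
  gapVal_eq_zero fun s hs => h (by rw [← hs, List.getLast?_append_of_ne_nil _ hy])

theorem gapVal_left_nil {p : PWord} (hp : p ≠ [X]) (q x y V : PWord) :
    gapVal p q x y V = gapVal [] q x y V :=
  gapVal_eq_of_fillsGap_iff fun L => by cases L <;> simp [FillsGap, Bad, hp]

theorem gapVal_right_nil {q : PWord} (hXA : q ≠ [X, A]) (hBA : q ≠ [B, A]) (p x y V : PWord) :
    gapVal p q x y V = gapVal p [] x y V :=
  gapVal_eq_of_fillsGap_iff fun L => by
    rcases L.eq_nil_or_concat with rfl | ⟨M, w, rfl⟩ <;> simp [FillsGap, Bad, hXA, hBA]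

theorem gapVal_eq_add_tightSum_cons (p q x y V : PWord) :
    gapVal p q x y V = (if ¬ Bad p q ∧ x ++ y = V then 1 else 0) +
      tightSum fun w => if Bad p w then 0 else gapVal w q (x ++ w) y V := by
  rw [← listSum_fillsGap (Nat.lt_succ_of_lt (Nat.lt_succ_self V.length)), listSum_succ_cons]
  congr 1
  · simp [FillsGap]
  · refine Finset.sum_congr rfl fun i _ => ?_
    beta_reduce
    split_ifs with h
    · simp [FillsGap, h, listSum_zero]
    · rw [gapVal, ← listSum_mul_left]
      exact listSum_congr fun L => by simp [FillsGap, h]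

theorem gapVal_eq_add_tightSum_concat (p q x y V : PWord) :
    gapVal p q x y V = (if ¬ Bad p q ∧ x ++ y = V then 1 else 0) +
      tightSum fun w => if Bad w q then 0 else gapVal p w x (w ++ y) V := by
  rw [← listSum_fillsGap (Nat.lt_succ_of_lt (Nat.lt_succ_self V.length)), listSum_succ_concat]
  congr 1
  · simp [FillsGap]
  · refine Finset.sum_congr rfl fun i _ => ?_
    beta_reduce
    split_ifs with h
    · simp [FillsGap, h, listSum_zero]
    · rw [gapVal, ← listSum_mul_left]
      exact listSum_congr fun L => by simp [FillsGap, h, mul_comm]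

-- Words other than `X` may all precede `q`; deleting a final `X` leaves a filling of a shorter gap.
theorem gapVal_add_gapVal_cons_X {p q : PWord} (hp : p ≠ [X]) (hq : q = [X, A] ∨ q = [B, A])
    (x y V : PWord) :
    gapVal p q x y V + gapVal p [] x (X :: y) V = gapVal p [] x y V := by
  have hbad (w : PWord) : Bad w q ↔ w = [X] := by simp [Bad, hq]
  have hnil (w : PWord) : ¬ Bad w [] := by simp [Bad]
  have hX : gapVal p [] x (X :: y) V = gapVal p [X] x ([X] ++ y) V :=
    (gapVal_right_nil (by simp) (by simp) _ _ _ _).symm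
  rw [gapVal_eq_add_tightSum_concat p q, gapVal_eq_add_tightSum_concat p [] x y, hX]
  simp only [hbad, hp, hnil, if_false, not_false_eq_true, true_and]
  rw [tightSum_eq_add_tightSum_ite fun w => gapVal p w x (w ++ y) V]
  ring

end GapVal

section CyclicValue

theorem exists_eq_append_cons_of_lt_length {α : Type*} {l : List α} {n : ℕ} (h : n < l.length) :
    ∃ u d p, l = u ++ d :: p ∧ n = p.length := by
  refine ⟨l.take (l.length - 1 - n), l[l.length - 1 - n], l.drop (l.length - 1 - n + 1), ?_, ?_⟩
  · rw [List.cons_getElem_drop_succ, List.take_append_drop]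
  · rw [List.length_drop]
    omega

theorem append_cons_eq_rotate_iff {α : Type*} (p s u V : List α) (c d : α) :
    s ++ (u ++ d :: p) = (V ++ [c]).rotate p.length ↔ d = c ∧ p ++ s ++ u = V := by
  have hrot : s ++ (u ++ d :: p) = (p ++ s ++ u ++ [d]).rotate p.length := by
    simp only [List.append_assoc, List.rotate_append_length_eq, List.singleton_append]
  rw [hrot, (List.rotate_injective _).eq_iff, List.append_singleton_inj, and_comm]

theorem isCyclicParsing_append_iff (V u p : PWord) (c d : PLetter) (L : List PWord) :
    IsCyclicParsing (V ++ [c]) p.length (L ++ [u ++ d :: p]) ↔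
      (∀ w ∈ L ++ [u ++ d :: p], w ∈ tightWords) ∧
        d = c ∧ FillsGap (u ++ d :: p) (u ++ d :: p) p u V L := by
  have hlen : p.length < (u ++ d :: p).length := by
    simp only [List.length_append, List.length_cons]
    omega
  have hflat : (L ++ [u ++ d :: p]).flatten = (V ++ [c]).rotate p.length ↔
      d = c ∧ p ++ L.flatten ++ u = V := by
    rw [List.flatten_append, List.flatten_singleton, append_cons_eq_rotate_iff]
  generalize u ++ d :: p = w at *
  have hchain : List.IsChain (fun u v => ¬ Bad u v) (w :: (L ++ [w])) ↔
      ¬ Bad w ((L ++ [w]).head (by simp)) ∧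
        List.IsChain (fun u v => ¬ Bad u v) (L ++ [w]) := by
    cases L <;> simp
  simp only [IsCyclicParsing, tightChain_iff, FillsGap, hflat, hchain, List.getLast_concat, hlen,
    true_and]
  grind

theorem listSum_isCyclicParsing_append (V u p : PWord) (c d : PLetter) :
    listSum wordOf (V.length + 1) (fun L =>
      if IsCyclicParsing (V ++ [c]) p.length (L ++ [u ++ d :: p]) then
        parseVal tightCoeff (L ++ [u ++ d :: p]) else 0) =
      wordVal (u ++ d :: p) *
        if d = c then gapVal (u ++ d :: p) (u ++ d :: p) p u V else 0 := by
  simp only [isCyclicParsing_append_iff, ite_forall_mem_tightWords_and]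
  split_ifs with h
  · rw [gapVal, ← listSum_mul_left]
    exact listSum_congr fun L => by simp [h, mul_comm]
  · simp only [h, false_and, if_false, listSum_zero, mul_zero]

/-- The value of the cyclic parsings of `(Vc)` in which a given copy of `w` covers the last letter
`c`, summed over the positions `j` of `c` in `w`, without the factor contributed by `w` itself. -/
noncomputable def coverVal (V : PWord) (c : PLetter) (w : PWord) : Polynomial ℤ :=
  ∑ j ∈ Finset.range w.length,
    if w[j]? = some c then gapVal w w (w.drop (j + 1)) (w.take j) V else 0

theorem sum_listSum_isCyclicParsing_append (V w : PWord) (c : PLetter) :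
    ∑ r ∈ Finset.range (V.length + 1), listSum wordOf (V.length + 1) (fun L =>
      if IsCyclicParsing (V ++ [c]) r (L ++ [w]) then parseVal tightCoeff (L ++ [w]) else 0) =
      wordVal w * coverVal V c w := by
  rw [coverVal, ← Finset.sum_range_reflect (n := w.length), Finset.mul_sum]
  refine Finset.sum_congr_of_eq_on_inter (fun r _ hr => ?_) (fun r hrw hrV => ?_)
    fun r _ hrw => ?_
  · have hnot (L : List PWord) : ¬ IsCyclicParsing (V ++ [c]) r (L ++ [w]) := fun ⟨_, _, _, h, _⟩ =>
      hr (by simpa using h)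
    simp only [hnot, if_false, listSum_zero]
  · rw [gapVal_eq_zero fun s hs => ?_, ite_self, mul_zero]
    have := congrArg List.length hs
    simp only [List.length_append, List.length_drop, Finset.mem_range] at this hrw hrV
    omega
  · obtain ⟨u, d, p, rfl, rfl⟩ := exists_eq_append_cons_of_lt_length (Finset.mem_range.1 hrw)
    have hj : (u ++ d :: p).length - 1 - p.length = u.length := by simp
    rw [listSum_isCyclicParsing_append, hj]
    simp

theorem cycVal_append_singleton (V : PWord) (c : PLetter) :
    cycVal (V ++ [c]) = tightSum (coverVal V c) := by
  have hsplit (r : ℕ) : listSum wordOf (V.length + 1 + 1) (fun L =>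
      if IsCyclicParsing (V ++ [c]) r L then parseVal tightCoeff L else 0) =
      ∑ i, listSum wordOf (V.length + 1) (fun L =>
        if IsCyclicParsing (V ++ [c]) r (L ++ [wordOf i]) then
          parseVal tightCoeff (L ++ [wordOf i]) else 0) := by
    rw [listSum_succ_concat, if_neg fun h => h.2.1 rfl, zero_add]
  rw [cycVal, List.length_append, List.length_singleton]
  refine (Finset.sum_congr rfl fun r _ => hsplit r).trans ?_
  rw [Finset.sum_comm]
  exact Finset.sum_congr rfl fun i _ => sum_listSum_isCyclicParsing_append V (wordOf i) c

theorem coverVal_eq_zero {c : PLetter} {w : PWord} (hw : c ∉ w) (V : PWord) : coverVal V c w = 0 :=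
  Finset.sum_eq_zero fun _ _ => if_neg fun h => hw (List.mem_of_getElem? h)

theorem cycVal_append_X (V : PWord) :
    cycVal (V ++ [X]) = gapVal [X] [] [] [] V +
      Polynomial.X * (gapVal [] [X, A] [A] [] V + gapVal [] [] [A, A] [] V +
        2 * gapVal [] [] [A] [A] V - gapVal [] [] [X, A] [] V - gapVal [] [] [A] [X] V) := by
  have hX : coverVal V X [X] = gapVal [X] [] [] [] V := by
    simp [coverVal, gapVal_right_nil]
  have hXA : coverVal V X [X, A] = gapVal [] [X, A] [A] [] V := by
    simp [coverVal, Finset.sum_range_succ, gapVal_left_nil]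
  have hXAA : coverVal V X [X, A, A] = gapVal [] [] [A, A] [] V := by
    simp [coverVal, Finset.sum_range_succ, gapVal_left_nil, gapVal_right_nil]
  have hAXA : coverVal V X [A, X, A] = gapVal [] [] [A] [A] V := by
    simp [coverVal, Finset.sum_range_succ, gapVal_left_nil, gapVal_right_nil]
  have hXXA : coverVal V X [X, X, A] = gapVal [] [] [X, A] [] V + gapVal [] [] [A] [X] V := by
    simp [coverVal, Finset.sum_range_succ, gapVal_left_nil, gapVal_right_nil]
  rw [cycVal_append_singleton, tightSum_eq, hX, hXA, hXAA, hAXA, hXXA,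
    coverVal_eq_zero (w := [A, A, A]) (by simp), coverVal_eq_zero (w := [B, A]) (by simp),
    coverVal_eq_zero (w := [A, B, A]) (by simp)]
  ring

theorem cycVal_append_B (V : PWord) :
    cycVal (V ++ [B]) =
      -Polynomial.X * (gapVal [] [B, A] [A] [] V + gapVal [] [] [A] [A] V) := by
  have hBA : coverVal V B [B, A] = gapVal [] [B, A] [A] [] V := by
    simp [coverVal, Finset.sum_range_succ, gapVal_left_nil]
  have hABA : coverVal V B [A, B, A] = gapVal [] [] [A] [A] V := by
    simp [coverVal, Finset.sum_range_succ, gapVal_left_nil, gapVal_right_nil]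
  rw [cycVal_append_singleton, tightSum_eq, hBA, hABA]
  simp only [List.mem_cons, reduceCtorEq, List.not_mem_nil, or_self, not_false_eq_true,
    coverVal_eq_zero]
  ring

end CyclicValue

section PaddedValue

/-- The value of the parsings of `XXV` that follow the word `X` and precede an unconstrained word.
As no word of the list can reach further to the left, it is the open value of `V`. -/
noncomputable def paddedVal (V : PWord) : Polynomial ℤ :=
  gapVal [X] [] [] [] (X :: X :: V)

theorem paddedVal_eq (V : PWord) :
    paddedVal V = gapVal [X] [] [] [] V + Polynomial.X *
      (gapVal [] [] [A, A] [] V - gapVal [] [] [X, A] [] V - gapVal [] [] [A] [] V) := by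
  have hX : gapVal [X] [] [] [] (X :: V) = gapVal [X] [] [] [] V +
      Polynomial.X * (gapVal [] [] [A, A] [] V - gapVal [] [] [X, A] [] V) := by
    rw [gapVal_eq_add_tightSum_cons]
    simp [tightSum_eq, gapVal_cons_cons, gapVal_left_nil, Bad]
  have hXX : paddedVal V = gapVal [X] [] [] [] (X :: V) + Polynomial.X *
      - gapVal [] [] [A] [] V := by
    rw [paddedVal, gapVal_eq_add_tightSum_cons]
    simp [tightSum_eq, gapVal_cons_cons, gapVal_left_nil, Bad]
  linear_combination hXX + hX

theorem paddedVal_cons_X (V : PWord) : paddedVal (X :: V) = paddedVal V := by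
  rw [paddedVal, gapVal_eq_add_tightSum_cons]
  simp [tightSum_eq, gapVal_cons_cons, Bad, paddedVal]

theorem paddedVal_append_X (V : PWord) : paddedVal (V ++ [X]) = paddedVal V := by
  have hX : gapVal [X] [] [] [X] (X :: X :: (V ++ [X])) = paddedVal V :=
    gapVal_append_append [X] [] [] [] [X] (X :: X :: V)
  have hA (q y : PWord) (hy : y.getLast? = some A) :
      gapVal [X] q [] y (X :: X :: (V ++ [X])) = 0 := by
    refine gapVal_eq_zero_of_getLast?_ne (by rintro rfl; simp at hy) ?_ _ _ _
    rw [hy, ← List.cons_append, ← List.cons_append, List.getLast?_concat]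
    simp
  rw [paddedVal, gapVal_eq_add_tightSum_concat]
  simp [tightSum_eq, gapVal_right_nil, hX, hA, Bad]

theorem paddedVal_core (V : PWord) : paddedVal (core V) = paddedVal V := by
  have hleft (s : PWord) : paddedVal (s.dropWhile (· == X)) = paddedVal s := by
    induction s with
    | nil => rfl
    | cons c s ih => cases c <;> simp [ih, paddedVal_cons_X]
  have hright (s : PWord) : paddedVal (s.rdropWhile (· == X)) = paddedVal s := by
    induction s using List.reverseRecOn with
    | nil => rfl
    | append_singleton s c ih => cases c <;> simp [ih, paddedVal_append_X]
  exact (hright _).trans (hleft V)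

end PaddedValue

section OpenValue

theorem core_sublist (V : PWord) : (core V).Sublist V :=
  (List.rdropWhile_prefix _ _).sublist.trans (List.dropWhile_suffix _).sublist

theorem core_ne_append_X (V s : PWord) : core V ≠ s ++ [X] := by
  intro h
  have hlast : ∀ hne : core V ≠ [], ¬ ((core V).getLast hne == X) = true :=
    List.rdropWhile_last_not _ _
  simp [h] at hlast

theorem core_ne_cons_X (V s : PWord) : core V ≠ X :: s := by
  intro h
  obtain ⟨z, hz⟩ : core V <+: V.dropWhile (· == X) := List.rdropWhile_prefix _ _
  have hhead := List.head?_dropWhile_not (· == X) V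
  simp [← hz, h] at hhead

theorem core_append_singleton {c : PLetter} (hc : c ≠ X) (s : PWord) :
    core (s ++ [c]) = (s ++ [c]).dropWhile (· == X) := by
  refine List.rdropWhile_eq_self_iff.2 fun hne => ?_
  rw [(List.dropWhile_suffix _).getLast hne, List.getLast_concat]
  simpa using hc

theorem core_flatten_cons {w : PWord} {L : List PWord} (h : ∀ v ∈ w :: L, v ∈ tightWords)
    (hw : w ≠ [X]) (hlast : (w :: L).getLast (List.cons_ne_nil w L) ≠ [X]) :
    core (w :: L).flatten = w.dropWhile (· == X) ++ L.flatten := by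
  obtain ⟨z, hz⟩ := exists_eq_append_A_of_mem_tightWords (h _ (List.getLast_mem _)) hlast
  have hflat : (w :: L).flatten = (w :: L).dropLast.flatten ++ z ++ [A] := by
    conv_lhs => rw [← List.dropLast_append_getLast (List.cons_ne_nil w L), hz]
    simp
  have hstrip : w.dropWhile (· == X) ≠ [] := by
    obtain ⟨z, rfl⟩ := exists_eq_append_A_of_mem_tightWords (h w List.mem_cons_self) hw
    simp
  rw [hflat, core_append_singleton (by simp), ← hflat, List.flatten_cons, List.dropWhile_append,
    if_neg (by simpa using hstrip)]

theorem isOpenParsing_cons_iff (W w : PWord) (L : List PWord) :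
    IsOpenParsing W (w :: L) ↔ (∀ v ∈ w :: L, v ∈ tightWords) ∧ (w ≠ [X] ∧ ¬ Bad [X] w) ∧
      FillsGap w [] (w.dropWhile (· == X)) [] (core W) L := by
  have hchain : List.IsChain (fun u v => ¬ Bad u v) (w :: (L ++ [[]])) ↔
      List.IsChain (fun u v => ¬ Bad u v) (w :: L) := by
    rcases L.eq_nil_or_concat with rfl | ⟨M, v, rfl⟩ <;> simp [Bad]
  have hBad : ¬ Bad [X] w ↔ w ≠ [X, A] ∧ w ≠ [B, A] := by simp [Bad]
  rw [FillsGap, hchain, hBad, List.append_nil]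
  constructor
  · rintro ⟨⟨htight, hadj⟩, hcore, hends⟩
    obtain ⟨hX, hXA, hBA, hlast⟩ := hends (List.cons_ne_nil w L)
    exact ⟨htight, ⟨hX, hXA, hBA⟩, hadj, by rw [← hcore, core_flatten_cons htight hX hlast]⟩
  · rintro ⟨htight, ⟨hX, hXA, hBA⟩, hadj, hcore⟩
    have hlast : (w :: L).getLast (List.cons_ne_nil w L) ≠ [X] := by
      rcases L.eq_nil_or_concat with rfl | ⟨M, v, rfl⟩
      · exact hX
      · rintro hv
        obtain rfl : v = [X] := by simpa using hv
        exact core_ne_append_X W (w.dropWhile (· == X) ++ M.flatten) (by simp [← hcore])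
    exact ⟨⟨htight, hadj⟩, by rw [core_flatten_cons htight hX hlast, hcore],
      fun _ => ⟨hX, hXA, hBA, hlast⟩⟩

theorem isOpenParsing_nil_iff (W : PWord) : IsOpenParsing W [] ↔ core W = [] := by
  have hnil : core [] = [] := rfl
  simp [IsOpenParsing, tightChain_iff, hnil, eq_comm (a := ([] : PWord))]

theorem openVal_eq_add_tightSum (W : PWord) :
    openVal W = (if core W = [] then 1 else 0) + tightSum fun w =>
      if w ≠ [X] ∧ ¬ Bad [X] w then gapVal w [] (w.dropWhile (· == X)) [] (core W) else 0 := by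
  have hlen : (core W).length < W.length + 2 := by have := (core_sublist W).length_le; omega
  have hsplit : openVal W = listSum wordOf (W.length + 2 + 1) (fun L =>
    if IsOpenParsing W L then parseVal tightCoeff L else 0) := rfl
  rw [hsplit, listSum_succ_cons]
  simp only [isOpenParsing_nil_iff]
  congr 1
  · simp [parseVal]
  · refine Finset.sum_congr rfl fun i _ => ?_
    simp only [isOpenParsing_cons_iff, ite_forall_mem_tightWords_and]
    split_ifs with h
    · rw [← listSum_fillsGap hlen, ← listSum_mul_left]
      exact listSum_congr fun L => by simp [h]
    · simp only [h, false_and, if_false, listSum_zero, mul_zero]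

theorem openVal_eq_paddedVal (W : PWord) : openVal W = paddedVal W := by
  have hzero (p q x y : PWord) : gapVal p q (X :: x) y (core W) = 0 :=
    gapVal_eq_zero fun s hs => core_ne_cons_X W _ hs.symm
  have hgap : gapVal [X] [] [] [] (core W) = (if core W = [] then 1 else 0) + Polynomial.X *
      (2 * gapVal [] [] [A, X, A] [] (core W) - gapVal [] [] [A, A, A] [] (core W) -
        gapVal [] [] [A, B, A] [] (core W)) := by
    rw [gapVal_eq_add_tightSum_cons]
    simp [tightSum_eq, hzero, gapVal_left_nil, Bad, eq_comm (a := ([] : PWord))]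
  have hopen : openVal W = (if core W = [] then 1 else 0) + Polynomial.X *
      (gapVal [] [] [A, A] [] (core W) + 2 * gapVal [] [] [A, X, A] [] (core W) -
        gapVal [] [] [A, A, A] [] (core W) -
        gapVal [] [] [A, B, A] [] (core W) - gapVal [] [] [A] [] (core W)) := by
    rw [openVal_eq_add_tightSum]
    simp [tightSum_eq, gapVal_left_nil, Bad]
  rw [← paddedVal_core, paddedVal_eq, hgap, hopen, hzero]
  ring

end OpenValue

open PLetter in
/-- **Main cyclic identity.**  For every finite string `W`,
`|(WX)| + 2|(WB)| - |W| = 0` (cyclic and open values in the tight puzzle). -/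
theorem main_identity (W : PWord) :
    cycVal (W ++ [X]) + 2 * cycVal (W ++ [B]) - openVal W = 0 := by
  have hXA : gapVal [] [X, A] [A] [] W + gapVal [] [] [A] [X] W = gapVal [] [] [A] [] W :=
    gapVal_add_gapVal_cons_X (by simp) (by simp) _ _ _
  have hBA : gapVal [] [B, A] [A] [] W + gapVal [] [] [A] [X] W = gapVal [] [] [A] [] W :=
    gapVal_add_gapVal_cons_X (by simp) (by simp) _ _ _
  rw [cycVal_append_X, cycVal_append_B, openVal_eq_paddedVal, paddedVal_eq]
  linear_combination Polynomial.X * hXA - 2 * Polynomial.X * hBA
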